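/- Let R be a semi-artinian absolutely flat (von Neumann regular) commutative ring. Then the assignments τ(W) = Loc(k(P) : P ∈ W) for a subset W ⊆ Spec R, and σ(L) = {P ∈ Spec R : k(P) ⊗_R L ≠ 0} for a localizing subcategory L of D(R), are mutually inverse, inclusion-preserving bijections between the set of subsets of Spec R and the set of localizing subcategories of D(R). -/

import Mathlib

open CategoryTheory CategoryTheory.Limits CategoryTheory.Pretriangulated CategoryTheory.MonoidalCategory

universe w v u

/-- A commutative ring is absolutely flat (von Neumann regular) if every element `r`
satisfies `r = r ^ 2 * x` for some `x`. -/
def IsAbsolutelyFlat (R : Type u) [CommRing R] : Prop :=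
  ∀ r : R, ∃ x : R, r = r ^ 2 * x

/-- A commutative ring is semi-artinian if every nonzero homomorphic image of `R` in the
category of `R`-modules contains a simple submodule. -/
def IsSemiArtinianRing (R : Type u) [CommRing R] : Prop :=
  ∀ I : Ideal R, I ≠ ⊤ → ∃ S : Submodule R (R ⧸ I), IsSimpleModule R ↥S

/-- A localizing subcategory: a class of objects of a triangulated category closed under
isomorphisms, shifts, cones of morphisms, and arbitrary set-indexed coproducts. -/
structure IsLocalizingSubcategory {T : Type u} [Category.{v} T] [HasZeroObject T]
    [Preadditive T] [HasShift T ℤ] [∀ n : ℤ, (shiftFunctor T n).Additive] [Pretriangulated T]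
    (L : Set T) : Prop where
  mem_of_iso : ∀ {A B : T}, (A ≅ B) → A ∈ L → B ∈ L
  shift_mem : ∀ (A : T) (n : ℤ), A ∈ L → (A⟦n⟧ : T) ∈ L
  cone_mem : ∀ Tr : Triangle T, (Tr ∈ distTriang T) → Tr.obj₁ ∈ L → Tr.obj₂ ∈ L → Tr.obj₃ ∈ L
  coproduct_mem : ∀ {ι : Type w} (f : ι → T), (∀ i, f i ∈ L) →
    ∀ c : Cofan f, IsColimit c → c.pt ∈ L

/-- The smallest localizing subcategory containing a class of objects `S`. -/
def localizingClosure {T : Type u} [Category.{v} T] [HasZeroObject T]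
    [Preadditive T] [HasShift T ℤ] [∀ n : ℤ, (shiftFunctor T n).Additive] [Pretriangulated T]
    (S : Set T) : Set T :=
  ⋂₀ {L : Set T | IsLocalizingSubcategory.{w} L ∧ S ⊆ L}

/-- The residue field `k(P) = R_P` of an absolutely flat ring at a prime `P`, viewed as an
object of the derived category `D(R)`, placed in degree `0`. -/
noncomputable def residueFieldObj (R : Type u) [CommRing R]
    [HasDerivedCategory.{w} (ModuleCat.{u} R)] (P : PrimeSpectrum R) :
    DerivedCategory (ModuleCat.{u} R) :=
  (DerivedCategory.singleFunctor (ModuleCat.{u} R) 0).obj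
    (ModuleCat.of R (Localization.AtPrime P.asIdeal))

/-- Degreewise tensor product `R_P ⊗_R A` of a cochain complex `A` of `R`-modules with the
localization `R_P` (which is flat, so this computes the derived tensor product). -/
noncomputable def tensorResidueField (R : Type u) [CommRing R] (P : PrimeSpectrum R)
    (A : CochainComplex (ModuleCat.{u} R) ℤ) : CochainComplex (ModuleCat.{u} R) ℤ :=
  ((tensorLeft (ModuleCat.of R (Localization.AtPrime P.asIdeal))).mapHomologicalComplex
    (ComplexShape.up ℤ)).obj A

/-!
Over an absolutely flat ring every module is flat, so `Y ↦ Y ⊗ A` is an exact functor from modules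
to complexes. For a complex `A` and a localizing subcategory `L`, the elements `r` with
`rR ⊗ A ∈ L` form an ideal `J`. If every element of a module `Y` is fixed by an element of `J`, then
`Y` has a resolution by coproducts of principal ideals contained in `J`; the telescope of its
syzygies vanishes, so `Y ⊗ A ∈ L`.

If `A ∈ L` then `1 ∈ J`, so `L` is a tensor ideal. As `k(P)` is a field, a nonzero `k(P) ⊗ A` has a
shift of `k(P)` as a retract, and an Eilenberg swindle gives `k(P) ∈ L`. If instead
`k(P) ⊗ A ∈ L` for all `P` and `J` were proper, then `R ⧸ J` would contain a simple module
`R ⧸ P = k(P)`, generated by the class of some `s ∉ J`; since `sR` is an extension of `k(P)` by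
`sR ∩ J`, this would force `s ∈ J`. Hence `L` is determined by its support.
-/

universe w'

section EilenbergSwindle

variable {C : Type*} [Category* C] [Preadditive C] [HasBinaryBiproducts C]
  [HasCoproductsOfShape ℕ C]

/-- The Eilenberg swindle: if `M` is a retract of `X`, then adding a copy of `M` to `∐_ℕ X` does
not change it. With `e` the idempotent of `X` cutting out `M`, the inclusion of `∐_ℕ X` is the map
`s` moving the image of `e` one step to the right. -/
noncomputable def sigmaIsoBiprodOfRetract {M X : C} (h : Retract M X) :
    (∐ fun _ : ℕ => X) ≅ (∐ fun _ : ℕ => X) ⊞ M :=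
  let e : X ⟶ X := h.r ≫ h.i
  let inj (n : ℕ) : X ⟶ ∐ fun _ : ℕ => X := Sigma.ι (fun _ => X) n
  let s : (∐ fun _ : ℕ => X) ⟶ ∐ fun _ : ℕ => X :=
    Sigma.desc fun n => (𝟙 X - e) ≫ inj n + e ≫ inj (n + 1)
  let ρ : (∐ fun _ : ℕ => X) ⟶ ∐ fun _ : ℕ => X :=
    Sigma.desc fun n => (𝟙 X - e) ≫ inj n + n.casesOn 0 fun m => e ≫ inj m
  let p : (∐ fun _ : ℕ => X) ⟶ M := Sigma.desc fun n => n.casesOn h.r fun _ => 0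
  have inj_s (n) : inj n ≫ s = (𝟙 X - e) ≫ inj n + e ≫ inj (n + 1) := Sigma.ι_desc _ _
  have inj_ρ (n) : inj n ≫ ρ = (𝟙 X - e) ≫ inj n + n.casesOn 0 fun m => e ≫ inj m :=
    Sigma.ι_desc _ _
  have inj_p (n) : inj n ≫ p = n.casesOn h.r fun _ => 0 := Sigma.ι_desc _ _
  have ee {Z : C} (f : X ⟶ Z) : e ≫ e ≫ f = e ≫ f := by simp [e]
  have s_ρ : s ≫ ρ = 𝟙 _ := Sigma.hom_ext _ _ fun n => by
    change inj n ≫ s ≫ ρ = inj n ≫ 𝟙 _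
    cases n <;> simp [reassoc_of% inj_s, inj_ρ, ee]
  have s_p : s ≫ p = 0 := Sigma.hom_ext _ _ fun n => by
    change inj n ≫ s ≫ p = inj n ≫ 0
    cases n <;> simp [reassoc_of% inj_s, inj_p, e]
  { hom := biprod.lift ρ p
    inv := biprod.desc s (h.i ≫ inj 0)
    hom_inv_id := Sigma.hom_ext _ _ fun n => by
      change inj n ≫ biprod.lift ρ p ≫ biprod.desc s (h.i ≫ inj 0) = inj n ≫ 𝟙 _
      cases n <;> simp [biprod.lift_desc, reassoc_of% inj_ρ, inj_s, reassoc_of% inj_p, e]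
    inv_hom_id := by ext <;> simp [s_ρ, s_p, inj_ρ, inj_p, e] }

end EilenbergSwindle

section Triangulated

variable {T : Type u} [Category.{v} T] [HasZeroObject T] [Preadditive T] [HasShift T ℤ]
  [∀ n : ℤ, (shiftFunctor T n).Additive] [Pretriangulated T] {L : Set T}

lemma trW_of_postcomp [IsTriangulated T] (P : ObjectProperty T) [P.IsTriangulated]
    [P.IsClosedUnderIsomorphisms] {X Y Z : T} {f : X ⟶ Y} {g : Y ⟶ Z} (hg : P.trW g)
    (hfg : P.trW (f ≫ g)) : P.trW f := by
  obtain ⟨A, u, v, hf⟩ := distinguished_cocone_triangle f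
  obtain ⟨B, _, _, hg, hB⟩ := hg
  obtain ⟨C, _, _, hfg, hC⟩ := hfg
  exact ⟨A, u, v, hf,
    P.ext_of_isTriangulatedClosed₁ _ (Triangulated.someOctahedron rfl hf hg hfg).mem hC hB⟩

open Pretriangulated.Opposite in
lemma trW_sigmaMap (P : ObjectProperty T) [P.IsTriangulated] {J : Type*}
    [P.IsClosedUnderColimitsOfShape (Discrete J)] [HasCoproductsOfShape J T]
    {X Y : J → T} (f : ∀ j, X j ⟶ Y j) (hf : ∀ j, P.trW (f j)) : P.trW (Limits.Sigma.map f) := by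
  have : P.op.IsClosedUnderLimitsOfShape (Discrete J) := by
    rw [← ObjectProperty.isClosedUnderColimitsOfShape_op_iff_op,
      ObjectProperty.isClosedUnderColimitsOfShape_iff_of_equivalence _ (Discrete.opposite J)]
    infer_instance
  have hf' (j : J) : P.op.trW (f j).op := by simpa [P.trW_op] using hf j
  choose Z g h hZ using hf'
  have prod_mem : P.op.trW (Limits.Pi.map fun j => (f j).op) :=
    ObjectProperty.trW.mk _ (productTriangle_distinguished _ fun j => (hZ j).choose)
      (P.op.prop_pi _ fun j => (hZ j).choose_spec)
  refine P.trW_of_op ((P.op.trW.arrow_mk_iso_iff (Arrow.isoMk (opCoproductIsoProduct Y)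
    (opCoproductIsoProduct X) (Limits.Pi.hom_ext _ _ fun j => ?_))).2 prod_mem)
  simp [← op_comp]

namespace IsLocalizingSubcategory

lemma isClosedUnderIsomorphisms (hL : IsLocalizingSubcategory.{w} L) :
    ObjectProperty.IsClosedUnderIsomorphisms (· ∈ L) :=
  ⟨fun e hA => hL.mem_of_iso e hA⟩

lemma isClosedUnderCoproducts (hL : IsLocalizingSubcategory.{w} L) (J : Type*) [Small.{w} J] :
    ObjectProperty.IsClosedUnderColimitsOfShape (· ∈ L) (Discrete J) := by
  have (J : Type w) : ObjectProperty.IsClosedUnderColimitsOfShape (· ∈ L) (Discrete J) := by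
    refine ⟨fun A ⟨c⟩ => hL.coproduct_mem (fun j => c.diag.obj ⟨j⟩) (fun j => c.prop_diag_obj ⟨j⟩)
      ((Cocone.precompose Discrete.natIsoFunctor.inv).obj c.cocone) ?_⟩
    exact (IsColimit.precomposeInvEquiv Discrete.natIsoFunctor _).symm c.isColimit
  rw [ObjectProperty.isClosedUnderColimitsOfShape_iff_of_equivalence _
    (Discrete.equivalence (equivShrink.{w} J))]
  exact this _

lemma sigma_mem (hL : IsLocalizingSubcategory.{w} L) {J : Type*} [Small.{w} J] (X : J → T)
    [HasCoproduct X] (hX : ∀ j, X j ∈ L) : ∐ X ∈ L :=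
  have := hL.isClosedUnderCoproducts J
  ObjectProperty.prop_colimit (· ∈ L) _ fun j => hX j.as

lemma map_sigma_mem (hL : IsLocalizingSubcategory.{w} L) {E : Type*} [Category* E] (F : E ⥤ T)
    {J : Type*} [Small.{w} J] (X : J → E) [HasCoproduct X]
    [PreservesColimit (Discrete.functor X) F] (hX : ∀ j, F.obj (X j) ∈ L) : F.obj (∐ X) ∈ L :=
  have := hL.isClosedUnderCoproducts J
  ObjectProperty.prop_of_isColimit (· ∈ L) (isColimitOfPreserves F (coproductIsCoproduct X))
    fun j => hX j.as

lemma mem_of_isZero (hL : IsLocalizingSubcategory.{w} L) {X : T} (hX : IsZero X) : X ∈ L :=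
  hL.coproduct_mem (fun i : PEmpty => i.elim) (fun i => i.elim) (Cofan.mk X fun i => i.elim)
    (Cofan.IsColimit.mk _ (fun _ => 0) (fun _ i => i.elim) fun _ _ _ => hX.eq_of_src _ _)

lemma mem₂ (hL : IsLocalizingSubcategory.{w} L) {Δ : Triangle T} (hΔ : Δ ∈ distTriang T)
    (h₁ : Δ.obj₁ ∈ L) (h₃ : Δ.obj₃ ∈ L) : Δ.obj₂ ∈ L :=
  hL.cone_mem _ (inv_rot_of_distTriang _ hΔ) (hL.shift_mem _ _ h₃) h₁

lemma mem_of_shift_mem (hL : IsLocalizingSubcategory.{w} L) {X : T} (n : ℤ)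
    (hX : (X⟦n⟧ : T) ∈ L) : X ∈ L :=
  hL.mem_of_iso ((shiftEquiv T n).unitIso.app X).symm (hL.shift_mem _ (-n) hX)

lemma biprod_mem (hL : IsLocalizingSubcategory.{w} L) {X Y : T} (hX : X ∈ L) (hY : Y ∈ L) :
    (X ⊞ Y) ∈ L :=
  hL.mem₂ (binaryBiproductTriangle_distinguished X Y) hX hY

lemma isTriangulated (hL : IsLocalizingSubcategory.{w} L) :
    ObjectProperty.IsTriangulated (· ∈ L) where
  exists_zero := ⟨_, isZero_zero T, hL.mem_of_isZero (isZero_zero T)⟩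
  isStableUnderShiftBy n := ⟨fun X hX => hL.shift_mem X n hX⟩
  ext₂' _ hΔ h₁ h₃ := ⟨_, hL.mem₂ hΔ h₁ h₃, ⟨Iso.refl _⟩⟩

lemma mem_of_retract [HasCoproductsOfShape ℕ T] (hL : IsLocalizingSubcategory.{w} L) {M X : T}
    (h : Retract M X) (hX : X ∈ L) : M ∈ L := by
  have hX' := hL.sigma_mem (fun _ : ℕ => X) fun _ => hX
  exact hL.cone_mem _ (binaryBiproductTriangle_distinguished _ _) hX'
    (hL.mem_of_iso (sigmaIsoBiprodOfRetract h) hX')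

lemma mem_of_trW_one_sub_shift [HasCoproductsOfShape ℕ T] (hL : IsLocalizingSubcategory.{w} L)
    {X : T} (hX : ObjectProperty.trW (· ∈ L)
      (𝟙 (∐ fun _ : ℕ => X) - Limits.Sigma.desc fun n => Sigma.ι (fun _ => X) (n + 1))) :
    X ∈ L := by
  obtain ⟨C, u, v, hC, hCL⟩ := hX
  let inj (n : ℕ) : X ⟶ ∐ fun _ : ℕ => X := Sigma.ι (fun _ => X) n
  let fold : (∐ fun _ : ℕ => X) ⟶ X := Limits.Sigma.desc fun _ => 𝟙 X
  have comp_fold : (𝟙 _ - Limits.Sigma.desc fun n => inj (n + 1)) ≫ fold = 0 :=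
    Sigma.hom_ext _ _ fun n => by simp [inj, fold]
  obtain ⟨(r : C ⟶ X), hr : fold = u ≫ r⟩ := Triangle.yoneda_exact₂ _ hC fold comp_fold
  have split : (inj 0 ≫ u) ≫ r = 𝟙 X := by
    rw [Category.assoc, ← hr]
    simp [inj, fold]
  exact hL.mem_of_retract ⟨inj 0 ≫ u, r, split⟩ hCL

/-- Compare with the constant tower on `M 0`: the cone of its `1 - shift` then lies in `L` and has
`M 0` as a retract. -/
lemma tower_zero_mem [HasCoproductsOfShape ℕ T] [IsTriangulated T]
    (hL : IsLocalizingSubcategory.{w} L) {M : ℕ → T} (g : ∀ n, M n ⟶ M (n + 1))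
    (hg : ∀ n, ObjectProperty.trW (· ∈ L) (g n))
    [IsIso (𝟙 (∐ M) - Limits.Sigma.desc fun n => g n ≫ Sigma.ι M (n + 1))] : M 0 ∈ L := by
  have := hL.isTriangulated
  have := hL.isClosedUnderIsomorphisms
  have := hL.isClosedUnderCoproducts ℕ
  let P : ObjectProperty T := (· ∈ L)
  let b : ∀ n, M 0 ⟶ M n := fun n => Nat.rec (𝟙 _) (fun n f => f ≫ g n) n
  have hb (n) : P.trW (b n) := by
    induction n with
    | zero => exact P.trW.id_mem _
    | succ n ih => exact P.trW.comp_mem _ _ ih (hg n)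
  have comm : (𝟙 _ - Limits.Sigma.desc fun n => Sigma.ι (fun _ => M 0) (n + 1)) ≫
      Limits.Sigma.map b =
        Limits.Sigma.map b ≫ (𝟙 (∐ M) - Limits.Sigma.desc fun n => g n ≫ Sigma.ι M (n + 1)) :=
    Sigma.hom_ext _ _ fun n => by simp [b]
  refine hL.mem_of_trW_one_sub_shift (trW_of_postcomp P (trW_sigmaMap P b hb) ?_)
  rw [comm]
  exact P.trW.comp_mem _ _ (trW_sigmaMap P b hb) (P.trW_of_isIso _)

end IsLocalizingSubcategory

end Triangulated

section LocalizingClosure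

variable {T : Type u} [Category.{v} T] [HasZeroObject T] [Preadditive T] [HasShift T ℤ]
  [∀ n : ℤ, (shiftFunctor T n).Additive] [Pretriangulated T] {L S : Set T}

lemma subset_localizingClosure : S ⊆ localizingClosure.{w} S := fun _ hA _ hL => hL.2 hA

lemma localizingClosure_subset (hL : IsLocalizingSubcategory.{w} L) (hS : S ⊆ L) :
    localizingClosure.{w} S ⊆ L := fun _ hA => hA L ⟨hL, hS⟩

lemma localizingClosure_mono {S' : Set T} (h : S ⊆ S') :
    localizingClosure.{w} S ⊆ localizingClosure.{w} S' :=
  fun _ hA L hL => hA L ⟨hL.1, h.trans hL.2⟩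

lemma isLocalizingSubcategory_localizingClosure :
    IsLocalizingSubcategory.{w} (localizingClosure.{w} S) where
  mem_of_iso e hA L hL := hL.1.mem_of_iso e (hA L hL)
  shift_mem A n hA L hL := hL.1.shift_mem A n (hA L hL)
  cone_mem Δ hΔ h₁ h₂ L hL := hL.1.cone_mem Δ hΔ (h₁ L hL) (h₂ L hL)
  coproduct_mem f hf c hc L hL := hL.1.coproduct_mem f (fun i => hf i L hL) c hc

lemma isLocalizingSubcategory_isZero : IsLocalizingSubcategory.{w} {X : T | IsZero X} where
  mem_of_iso e hA := hA.of_iso e.symm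
  shift_mem _ n hA := (shiftFunctor T n).map_isZero hA
  cone_mem Δ hΔ h₁ h₂ := Triangle.isZero₃_of_isZero₁₂ Δ hΔ h₁ h₂
  coproduct_mem _ hf _ hc := (IsZero.iff_id_eq_zero _).2 <|
    Cofan.IsColimit.hom_ext hc _ _ fun i => (hf i).eq_of_src _ _

lemma IsLocalizingSubcategory.comap {T' : Type*} [Category* T'] [HasZeroObject T']
    [Preadditive T'] [HasShift T' ℤ] [∀ n : ℤ, (shiftFunctor T' n).Additive] [Pretriangulated T']
    (hL : IsLocalizingSubcategory.{w} L) (F : T' ⥤ T) [F.CommShift ℤ] [F.IsTriangulated]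
    [∀ J : Type w, PreservesColimitsOfShape (Discrete J) F] :
    IsLocalizingSubcategory.{w} {X | F.obj X ∈ L} where
  mem_of_iso e hA := hL.mem_of_iso (F.mapIso e) hA
  shift_mem _ n hA := hL.mem_of_iso ((F.commShiftIso n).symm.app _) (hL.shift_mem _ n hA)
  cone_mem Δ hΔ h₁ h₂ := hL.cone_mem _ (F.map_distinguished Δ hΔ) h₁ h₂
  coproduct_mem {ι} _ hf _ hc :=
    have := hL.isClosedUnderCoproducts ι
    ObjectProperty.prop_of_isColimit (· ∈ L) (isColimitOfPreserves F hc) fun i => hf i.as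

end LocalizingClosure

section HomologyColimits

variable {J C : Type*} [Category* J] [Category* C] [Abelian C] [HasColimitsOfShape J C]
  [HasExactColimitsOfShape J C]

open ShortComplex.FunctorEquivalence in
instance preservesColimitsOfShape_shortComplexHomologyFunctor :
    PreservesColimitsOfShape J (ShortComplex.homologyFunctor C) := by
  suffices h : ∀ S, PreservesColimit ((functor J C).obj S) (ShortComplex.homologyFunctor C) from
    ⟨fun {F} => have : PreservesColimit ((inverse J C ⋙ functor J C).obj F) _ := h _
      preservesColimit_of_iso_diagram _ ((counitIso J C).app F)⟩
  intro S
  let τ (j : J) : (evaluation J C).obj j ⟶ colim := { app := fun G => colimit.ι G j }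
  let c : Cocone ((functor J C).obj S) :=
    { pt := S.map colim
      ι := { app := fun j => S.mapNatTrans (τ j)
             naturality := fun _ _ f => by
              ext <;> exact (colimit.w _ f).trans (Category.comp_id _).symm } }
  have hc : IsColimit c := ShortComplex.isColimitOfIsColimitπ c
    (colimit.isColimit S.X₁) (colimit.isColimit S.X₂) (colimit.isColimit S.X₃)
  have homologyMap_eq {F G : (J ⥤ C) ⥤ C} [F.PreservesZeroMorphisms] [G.PreservesZeroMorphisms]
      [F.PreservesHomology] [G.PreservesHomology] (α : F ⟶ G) :
      α.app S.homology ≫ (S.mapHomologyIso G).inv =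
        (S.mapHomologyIso F).inv ≫ ShortComplex.homologyMap (S.mapNatTrans α) := by
    simp [S.homologyMap_mapNatTrans α]
  let e : S.homology ≅ (functor J C).obj S ⋙ ShortComplex.homologyFunctor C :=
    NatIso.ofComponents (fun j => (S.mapHomologyIso ((evaluation J C).obj j)).symm)
      fun f => homologyMap_eq ((evaluation J C).map f)
  refine preservesColimit_of_preserves_colimit_cocone hc
    (IsColimit.equivOfNatIsoOfIso e (colimit.cocone S.homology)
      ((ShortComplex.homologyFunctor C).mapCocone c)
      (Cocone.ext (S.mapHomologyIso colim).symm fun j => ?_) (colimit.isColimit _))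
  change (e.inv.app j ≫ (τ j).app S.homology) ≫ (S.mapHomologyIso colim).inv =
    ShortComplex.homologyMap (S.mapNatTrans (τ j))
  rw [Category.assoc, homologyMap_eq]
  exact Iso.hom_inv_id_assoc _ _

variable {ι : Type*} (c : ComplexShape ι)

instance preservesColimitsOfShape_homologyFunctor (n : ι) :
    PreservesColimitsOfShape J (HomologicalComplex.homologyFunctor C c n) := by
  have : PreservesColimitsOfShape J (HomologicalComplex.shortComplexFunctor C c n) :=
    ⟨fun {K} => ⟨fun h => ⟨ShortComplex.isColimitOfIsColimitπ _
      (isColimitOfPreserves (HomologicalComplex.eval C c (c.prev n)) h)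
      (isColimitOfPreserves (HomologicalComplex.eval C c n) h)
      (isColimitOfPreserves (HomologicalComplex.eval C c (c.next n)) h)⟩⟩⟩
  exact preservesColimitsOfShape_of_natIso (HomologicalComplex.homologyFunctorIso C c n).symm

instance isStableUnderColimitsOfShape_quasiIso :
    (HomologicalComplex.quasiIso C c).IsStableUnderColimitsOfShape J where
  condition X Y cX cY hX hY f hf φ hφ := by
    rw [HomologicalComplex.mem_quasiIso_iff]
    refine ⟨fun n => ?_⟩
    rw [quasiIsoAt_iff_isIso_homologyMap]
    let H := HomologicalComplex.homologyFunctor C c n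
    refine MorphismProperty.IsStableUnderColimitsOfShape.condition (W := .isomorphisms C) _ _ _ _
      (isColimitOfPreserves H hX) (isColimitOfPreserves H hY) (Functor.whiskerRight f H)
      (fun j => ?_) (H.map φ) fun j => ?_
    · have : QuasiIso (f.app j) := hf j
      exact inferInstanceAs (IsIso (HomologicalComplex.homologyMap (f.app j) n))
    · simpa using congr(H.map $(hφ j))

end HomologyColimits

section DerivedCoproducts

open DerivedCategory

variable {C : Type u} [Category.{v} C] [Abelian C] [HasDerivedCategory.{w} C]

instance preservesColimitsOfShape_Q_comp_homologyFunctor {J : Type*} [Category* J]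
    [HasColimitsOfShape J C] [HasExactColimitsOfShape J C] (n : ℤ) :
    PreservesColimitsOfShape J (Q ⋙ DerivedCategory.homologyFunctor C n) :=
  preservesColimitsOfShape_of_natIso (homologyFunctorFactors C n).symm

lemma exists_discreteFunctor_comp_Q_iso {J : Type*} (K : Discrete J ⥤ DerivedCategory C) :
    ∃ X : J → CochainComplex C ℤ, Nonempty (Discrete.functor X ⋙ Q ≅ K) :=
  ⟨fun j => Q.objPreimage (K.obj ⟨j⟩), ⟨Discrete.natIso fun j => Q.objObjPreimageIso (K.obj j)⟩⟩

variable {J : Type*} [HasColimitsOfShape (Discrete J) C] [HasExactColimitsOfShape (Discrete J) C]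
  (X : J → CochainComplex C ℤ)

lemma exists_Q_sigma_desc {Y : DerivedCategory C} (a : ∀ j, Q.obj (X j) ⟶ Y) :
    ∃ b : Q.obj (∐ X) ⟶ Y, ∀ j, Q.map (Sigma.ι X j) ≫ b = a j := by
  let e := Q.objObjPreimageIso Y
  choose X' s hs g hg using fun j => right_fac (a j ≫ e.inv)
  have : IsIso (Q.map (Limits.Sigma.map s)) := by
    rw [isIso_Q_map_iff_quasiIso]
    exact MorphismProperty.colimMap (W := HomologicalComplex.quasiIso C (.up ℤ)) _
      fun j => (isIso_Q_map_iff_quasiIso _ _).1 (hs j.as)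
  refine ⟨inv (Q.map (Limits.Sigma.map s)) ≫ Q.map (Limits.Sigma.desc g) ≫ e.hom, fun j => ?_⟩
  have := hs j
  rw [← cancel_epi (Q.map (s j)), ← Q.map_comp_assoc, ← Limits.Sigma.ι_map, Q.map_comp_assoc,
    IsIso.hom_inv_id_assoc, ← Q.map_comp_assoc, Sigma.ι_desc, ← cancel_mono e.inv]
  simp [hg]

variable {X} in
lemma Q_sigma_hom_ext {Y : DerivedCategory C} {b b' : Q.obj (∐ X) ⟶ Y}
    (h : ∀ j, Q.map (Sigma.ι X j) ≫ b = Q.map (Sigma.ι X j) ≫ b') : b = b' := by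
  obtain ⟨K, k, _, hT⟩ := distinguished_cocone_triangle₁ (b - b')
  have lifts (j) : ∃ l, Q.map (Sigma.ι X j) = l ≫ k := Triangle.coyoneda_exact₂ _ hT _
    (by change Q.map _ ≫ (b - b') = 0; rw [Preadditive.comp_sub, h, sub_self])
  choose l hl using lifts
  obtain ⟨m, hm⟩ := exists_Q_sigma_desc X l
  have : IsIso (m ≫ k) := by
    rw [DerivedCategory.isIso_iff]
    intro n
    let H := DerivedCategory.homologyFunctor C n
    suffices H.map (m ≫ k) = 𝟙 _ by rw [this]; infer_instance
    refine (isColimitOfPreserves (Q ⋙ H) (coproductIsCoproduct X)).hom_ext fun j => ?_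
    change H.map (Q.map (Sigma.ι X j.as)) ≫ H.map (m ≫ k) = H.map (Q.map (Sigma.ι X j.as)) ≫ 𝟙 _
    rw [← H.map_comp, reassoc_of% hm, ← hl, Category.comp_id]
  rw [← sub_eq_zero, ← cancel_epi (m ≫ k), Category.assoc, comp_zero]
  exact (m ≫= comp_distTriang_mor_zero₁₂ _ hT).trans comp_zero

instance preservesColimitsOfShape_Q :
    PreservesColimitsOfShape (Discrete J) (Q : CochainComplex C ℤ ⥤ DerivedCategory C) := by
  have (X : J → CochainComplex C ℤ) : PreservesColimit (Discrete.functor X)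
      (Q : CochainComplex C ℤ ⥤ DerivedCategory C) := by
    choose b hb using fun (s : Cofan fun j => Q.obj (X j)) => exists_Q_sigma_desc X s.inj
    exact preservesColimit_of_preserves_colimit_cocone (coproductIsCoproduct X)
      ((isColimitMapCoconeCofanMkEquiv Q X _).symm (Cofan.IsColimit.mk _ b hb fun s m hm =>
        Q_sigma_hom_ext fun j => (hm j).trans (hb s j).symm))
  exact preservesColimitsOfShape_of_discrete _

instance hasColimitsOfShape_derivedCategory :
    HasColimitsOfShape (Discrete J) (DerivedCategory C) where
  has_colimit K := by
    obtain ⟨X, ⟨e⟩⟩ := exists_discreteFunctor_comp_Q_iso K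
    exact hasColimit_of_iso e.symm

lemma preservesColimitsOfShape_of_Q_comp {D : Type*} [Category* D] (F : DerivedCategory C ⥤ D)
    [PreservesColimitsOfShape (Discrete J) (Q ⋙ F)] : PreservesColimitsOfShape (Discrete J) F where
  preservesColimit {K} := by
    obtain ⟨X, ⟨e⟩⟩ := exists_discreteFunctor_comp_Q_iso K
    have : PreservesColimit (Discrete.functor X ⋙ Q) F :=
      preservesColimit_of_preserves_colimit_cocone
        (isColimitOfPreserves Q (colimit.isColimit (Discrete.functor X)))
        (isColimitOfPreserves (Q ⋙ F) (colimit.isColimit (Discrete.functor X)))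
    exact preservesColimit_of_iso_diagram F e

instance preservesColimitsOfShape_derivedHomologyFunctor (n : ℤ) :
    PreservesColimitsOfShape (Discrete J) (DerivedCategory.homologyFunctor C n) :=
  preservesColimitsOfShape_of_Q_comp _

end DerivedCoproducts

section GhostLemma

open DerivedCategory HomologicalComplex

variable {C : Type u} [Category.{v} C] [Abelian C] [HasDerivedCategory.{w} C]

lemma isIso_one_sub_sigma_desc_of_homologyMap_eq_zero [HasColimitsOfShape (Discrete ℕ) C]
    [HasExactColimitsOfShape (Discrete ℕ) C] {M : ℕ → DerivedCategory C}
    (g : ∀ i, M i ⟶ M (i + 1))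
    (hg : ∀ i n, (DerivedCategory.homologyFunctor C n).map (g i) = 0) :
    IsIso (𝟙 (∐ M) - Limits.Sigma.desc fun i => g i ≫ Sigma.ι M (i + 1)) := by
  rw [DerivedCategory.isIso_iff]
  intro n
  let H := DerivedCategory.homologyFunctor C n
  have shift_eq_zero : H.map (Limits.Sigma.desc fun i => g i ≫ Sigma.ι M (i + 1)) = 0 :=
    (isColimitOfPreserves H (coproductIsCoproduct M)).hom_ext fun i => by
      change H.map (Sigma.ι M i.as) ≫ H.map _ = H.map _ ≫ 0
      rw [← H.map_comp, Sigma.ι_desc, H.map_comp, hg, zero_comp, comp_zero]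
  rw [Functor.map_sub, shift_eq_zero, sub_zero]
  infer_instance

/-- The ghost lemma: iterating the maps `X ⟶ Y` gives a tower whose maps vanish on homology, so its
telescope is zero. -/
lemma IsLocalizingSubcategory.mem_of_exists_epi_homology
    [HasColimitsOfShape (Discrete ℕ) C] [HasExactColimitsOfShape (Discrete ℕ) C]
    {L : Set (DerivedCategory C)} (hL : IsLocalizingSubcategory.{w'} L)
    (𝓑 : Set (DerivedCategory C))
    (h𝓑 : ∀ X ∈ 𝓑, ∃ F ∈ L, ∃ Y ∈ 𝓑, ∃ (f : F ⟶ X) (g : X ⟶ Y) (δ : Y ⟶ F⟦(1 : ℤ)⟧),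
      Triangle.mk f g δ ∈ distTriang _ ∧
        ∀ n, Epi ((DerivedCategory.homologyFunctor C n).map f))
    {X : DerivedCategory C} (hX : X ∈ 𝓑) : X ∈ L := by
  have ghost (X : 𝓑) : ∃ (Y : 𝓑) (g : X.1 ⟶ Y.1), ObjectProperty.trW (· ∈ L) g ∧
      ∀ n, (DerivedCategory.homologyFunctor C n).map g = 0 := by
    obtain ⟨F, hF, Y, hY, f, g, δ, hT, hf⟩ := h𝓑 X X.2
    refine ⟨⟨Y, hY⟩, g, ?_, fun n =>
      (HomologySequence.epi_homologyMap_mor₁_iff _ hT n).1 (hf n)⟩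
    have := hL.isTriangulated
    have := hL.isClosedUnderIsomorphisms
    rw [ObjectProperty.trW_iff']
    exact ⟨_, _, _, hT, hF⟩
  choose next g hg hg0 using ghost
  let M (n : ℕ) : 𝓑 := n.rec ⟨X, hX⟩ fun _ => next
  have := isIso_one_sub_sigma_desc_of_homologyMap_eq_zero (M := fun n => (M n).1)
    (fun n => g (M n)) fun n => hg0 (M n)
  exact hL.tower_zero_mem (M := fun n => (M n).1) (fun n => g (M n)) fun n => hg (M n)

end GhostLemma

section Generation

open DerivedCategory HomologicalComplex

variable {C : Type u} [Category.{v} C] [Abelian C]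

lemma epi_homologyMap_mkHomFromSingle {ι : Type*} {c : ComplexShape ι} [DecidableEq ι] {A : C}
    (B : HomologicalComplex C c) (n : ι) (f : A ⟶ B.cycles n) [Epi f]
    (hf : ∀ k, c.Rel n k → (f ≫ B.iCycles n) ≫ B.d n k = 0) :
    Epi (homologyMap (mkHomFromSingle (f ≫ B.iCycles n) hf) n) := by
  let φ := mkHomFromSingle (f ≫ B.iCycles n) hf
  have cyclesMap_eq : cyclesMap φ n = (singleObjCyclesSelfIso c n A).hom ≫ f := by
    simp [← cancel_mono (B.iCycles n), φ, singleObjCyclesSelfIso_hom]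
  have fac : ((single C c n).obj A).homologyπ n ≫ homologyMap φ n =
      (singleObjCyclesSelfIso c n A).hom ≫ f ≫ B.homologyπ n := by
    rw [← reassoc_of% cyclesMap_eq, homologyπ_naturality]
  exact epi_of_epi_fac fac

lemma exists_epi_homologyMap_sigma_single [HasCoproducts.{v} C] {G : C}
    (hG : IsSeparator G) (B : CochainComplex C ℤ) :
    ∃ f : (∐ fun n : ℤ => (single C (.up ℤ) n).obj (∐ fun _ : G ⟶ B.cycles n => G)) ⟶ B,
      ∀ n, Epi (homologyMap f n) := by
  let π (n : ℤ) : (∐ fun _ : G ⟶ B.cycles n => G) ⟶ B.cycles n := Limits.Sigma.desc fun g => g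
  have (n : ℤ) : Epi (π n) := (isSeparator_iff_epi G).1 hG _
  let f (n : ℤ) : (single C (.up ℤ) n).obj (∐ fun _ : G ⟶ B.cycles n => G) ⟶ B :=
    mkHomFromSingle (π n ≫ B.iCycles n) fun k _ => by simp
  have epi_f (n) : Epi (homologyMap (f n) n) := epi_homologyMap_mkHomFromSingle B n (π n) _
  refine ⟨Limits.Sigma.desc f, fun n => ?_⟩
  refine epi_of_epi_fac (f := homologyMap (Sigma.ι _ n) n) (h := homologyMap (f n) n) ?_
  rw [← homologyMap_comp, Sigma.ι_desc]

variable [HasDerivedCategory.{w} C] {L : Set (DerivedCategory C)}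

lemma IsLocalizingSubcategory.singleFunctor_obj_mem_iff (hL : IsLocalizingSubcategory.{w'} L)
    {A : C} (n : ℤ) : (singleFunctor C n).obj A ∈ L ↔ (singleFunctor C 0).obj A ∈ L := by
  let e : ((singleFunctor C n).obj A)⟦n⟧ ≅ (singleFunctor C 0).obj A :=
    ((singleFunctors C).shiftIso n 0 n (add_zero n)).app A
  exact ⟨fun h => hL.mem_of_iso e (hL.shift_mem _ n h),
    fun h => hL.mem_of_shift_mem n (hL.mem_of_iso e.symm h)⟩

lemma IsLocalizingSubcategory.mem_of_isSeparator [HasCoproducts.{v} C] [AB4OfSize.{v} C]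
    (hL : IsLocalizingSubcategory.{v} L) {G : C} (hG : IsSeparator G)
    (hGL : (singleFunctor C 0).obj G ∈ L) (X : DerivedCategory C) : X ∈ L := by
  have := hasCoproducts_shrink.{0, v} (C := C)
  have := AB4OfSize_shrink.{0, v} C
  refine hL.mem_of_exists_epi_homology Set.univ (fun X _ => ?_) (Set.mem_univ X)
  obtain ⟨f, hf⟩ := exists_epi_homologyMap_sigma_single hG (Q.objPreimage X)
  let e := Q.objObjPreimageIso X
  obtain ⟨Y, g, δ, hT⟩ := distinguished_cocone_triangle (Q.map f ≫ e.hom)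
  refine ⟨_, hL.map_sigma_mem Q _ fun n => ?_, Y, trivial, _, g, δ, hT, fun n => ?_⟩
  · exact hL.map_sigma_mem (single C _ n ⋙ Q) _ fun _ =>
      (hL.singleFunctor_obj_mem_iff n).2 hGL
  · have : Epi ((Q ⋙ DerivedCategory.homologyFunctor C n).map f) :=
      ((MorphismProperty.epimorphisms C).arrow_mk_iso_iff
        (Arrow.isoOfNatIso (homologyFunctorFactors C n) (Arrow.mk f))).2 (hf n)
    rw [Functor.map_comp]
    exact epi_comp' this inferInstance

end Generation

section AbsolutelyFlat

variable {R : Type u} [CommRing R]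

namespace IsAbsolutelyFlat

lemma isIdempotentElem_ideal (hR : IsAbsolutelyFlat R) (I : Ideal R) : IsIdempotentElem I := by
  refine le_antisymm Ideal.mul_le_left fun r hr => ?_
  obtain ⟨x, hx⟩ := hR r
  rw [hx, sq, mul_assoc]
  exact Ideal.mul_mem_mul hr (I.mul_mem_right x hr)

lemma flat (hR : IsAbsolutelyFlat R) (M : Type*) [AddCommGroup M] [Module R M] :
    Module.Flat R M := by
  rw [Module.Flat.iff_rTensor_injective]
  intro I hI
  obtain ⟨e, he, rfl⟩ := (Ideal.isIdempotentElem_iff_of_fg I hI).1 (hR.isIdempotentElem_ideal I)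
  let ρ : R →ₗ[R] Ideal.span {e} :=
    LinearMap.toSpanSingleton R _ ⟨e, Ideal.mem_span_singleton_self e⟩
  have hρ : ρ ∘ₗ (Ideal.span {e}).subtype = LinearMap.id := by
    ext ⟨z, hz⟩
    obtain ⟨b, rfl⟩ := Ideal.mem_span_singleton'.1 hz
    simp [ρ, mul_assoc, he.eq]
  refine Function.LeftInverse.injective (g := ρ.rTensor M) fun z => ?_
  rw [← LinearMap.comp_apply, ← LinearMap.rTensor_comp, hρ, LinearMap.rTensor_id,
    LinearMap.id_apply]

lemma isMaximal (hR : IsAbsolutelyFlat R) (P : Ideal R) [P.IsPrime] : P.IsMaximal := by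
  refine Ideal.isMaximal_iff.2 ⟨Ideal.one_notMem P, fun J r hPJ hrP hrJ => ?_⟩
  obtain ⟨x, hx⟩ := hR r
  have h : r * (1 - r * x) ∈ P := by
    rw [show r * (1 - r * x) = 0 by linear_combination hx]
    exact P.zero_mem
  simpa using J.add_mem (hPJ ((Ideal.IsPrime.mem_or_mem ‹_› h).resolve_left hrP))
    (J.mul_mem_right x hrJ)

lemma nonempty_retract_span_singleton (hR : IsAbsolutelyFlat R) {I K : Ideal R}
    {t : R} (ht : t ∈ I ⊔ K) :
    Nonempty (Retract (ModuleCat.of R (Ideal.span {t})) (ModuleCat.of R I ⊞ ModuleCat.of R K)) := by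
  obtain ⟨u, hu, v, hv, rfl⟩ := Submodule.mem_sup.1 ht
  obtain ⟨x, hx⟩ := hR (u + v)
  let mulTo {I' : Ideal R} (K' : Ideal R) (z : K') : ModuleCat.of R I' ⟶ ModuleCat.of R K' :=
    ModuleCat.ofHom (LinearMap.toSpanSingleton R K' z ∘ₗ I'.subtype)
  let e : Ideal.span {u + v} :=
    ⟨(u + v) * x, Ideal.mul_mem_right x _ (Ideal.mem_span_singleton_self _)⟩
  refine ⟨⟨biprod.lift (mulTo I (x • ⟨u, hu⟩)) (mulTo K (x • ⟨v, hv⟩)),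
    biprod.desc (mulTo _ e) (mulTo _ e), ?_⟩⟩
  rw [biprod.lift_desc]
  ext ⟨y, hy⟩
  obtain ⟨b, rfl⟩ := Ideal.mem_span_singleton'.1 hy
  change b * (u + v) * (x * u) * ((u + v) * x) + b * (u + v) * (x * v) * ((u + v) * x) =
    b * (u + v)
  linear_combination (-b - b * (u + v) * x) * hx

variable (P : Ideal R) [P.IsPrime]

lemma ker_algebraMap_localization (hR : IsAbsolutelyFlat R) :
    RingHom.ker (algebraMap R (Localization.AtPrime P)) = P := by
  refine le_antisymm (fun r hr => ?_) fun r hr => ?_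
  · by_contra hrP
    exact (IsLocalization.map_units (Localization.AtPrime P) (⟨r, hrP⟩ : P.primeCompl)).ne_zero hr
  · obtain ⟨x, hx⟩ := hR r
    have hs : 1 - r * x ∉ P := fun h =>
      Ideal.one_notMem P (by simpa using P.add_mem h (P.mul_mem_right x hr))
    refine (IsLocalization.map_eq_zero_iff P.primeCompl _ r).2 ⟨⟨1 - r * x, hs⟩, ?_⟩
    linear_combination hx

lemma algebraMap_localization_surjective (hR : IsAbsolutelyFlat R) :
    Function.Surjective (algebraMap R (Localization.AtPrime P)) := by
  intro z
  obtain ⟨a, s, rfl⟩ := IsLocalization.exists_mk'_eq P.primeCompl z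
  obtain ⟨x, hx⟩ := hR s
  refine ⟨a * x, (IsLocalization.mk'_eq_iff_eq_mul.2 ?_).symm⟩
  have h : algebraMap R (Localization.AtPrime P) (s * x) = 1 :=
    (IsLocalization.map_units (Localization.AtPrime P) s).mul_left_cancel (by
      rw [← map_mul, mul_one, ← mul_assoc, ← sq, ← hx])
  rw [← map_mul, mul_assoc, mul_comm x, map_mul, h, mul_one]

lemma isTorsionBySet_localization (hR : IsAbsolutelyFlat R) :
    Module.IsTorsionBySet R (Localization.AtPrime P) P := fun z r => by
  have : r.1 ∈ RingHom.ker (algebraMap R (Localization.AtPrime P)) := by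
    rw [hR.ker_algebraMap_localization P]
    exact r.2
  change r.1 • z = 0
  rw [Algebra.smul_def, (RingHom.mem_ker).1 this, zero_mul]

/-- The identification `R_P ≃ R ⧸ P`, a consequence of `R_P` being a quotient of `R`. -/
noncomputable def localizationEquivQuotient (hR : IsAbsolutelyFlat R) :
    Localization.AtPrime P ≃ₗ[R] R ⧸ P :=
  ((Submodule.quotEquivOfEq _ _ (hR.ker_algebraMap_localization P).symm).trans
    ((Algebra.linearMap R (Localization.AtPrime P)).quotKerEquivOfSurjective
      (hR.algebraMap_localization_surjective P))).symm

end IsAbsolutelyFlat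

lemma isTorsionBySet_tensorProduct {I : Ideal R} {M : Type*} [AddCommGroup M] [Module R M]
    (hM : Module.IsTorsionBySet R M I) (N : Type*) [AddCommGroup N] [Module R N] :
    Module.IsTorsionBySet R (TensorProduct R M N) I := fun t r => by
  induction t with
  | zero => exact smul_zero _
  | add x y hx hy => rw [smul_add, hx, hy, add_zero]
  | tmul m n => rw [TensorProduct.smul_tmul', @hM m r, TensorProduct.zero_tmul]

lemma subsingleton_tensorProduct_of_isCoprime {I J : Ideal R} (h : IsCoprime I J) {M N : Type*}
    [AddCommGroup M] [Module R M] [AddCommGroup N] [Module R N]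
    (hM : Module.IsTorsionBySet R M I) (hN : Module.IsTorsionBySet R N J) :
    Subsingleton (TensorProduct R M N) := by
  obtain ⟨a, ha, b, hb, hab⟩ := Ideal.isCoprime_iff_exists.1 h
  refine subsingleton_of_forall_eq 0 fun t => ?_
  have hMN := isTorsionBySet_tensorProduct hM N
  have hNM := isTorsionBySet_tensorProduct hN M
  have hat : a • t = 0 := @hMN t ⟨a, ha⟩
  have hbt : b • t = 0 := (TensorProduct.comm R M N).injective <| by
    rw [map_smul, map_zero]
    exact @hNM _ ⟨b, hb⟩
  rw [← one_smul R t, ← hab, add_smul, hat, hbt, add_zero]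

lemma IsAbsolutelyFlat.subsingleton_localization_tensorProduct (hR : IsAbsolutelyFlat R)
    {P P' : PrimeSpectrum R} (h : P ≠ P') : Subsingleton
      (TensorProduct R (Localization.AtPrime P.asIdeal) (Localization.AtPrime P'.asIdeal)) :=
  have := hR.isMaximal P.asIdeal
  have := hR.isMaximal P'.asIdeal
  subsingleton_tensorProduct_of_isCoprime
    (Ideal.isCoprime_of_isMaximal fun hPP' => h (PrimeSpectrum.ext hPP'))
    (hR.isTorsionBySet_localization P.asIdeal) (hR.isTorsionBySet_localization P'.asIdeal)

lemma nontrivial_tensorProduct_self (B : Type*) [CommRing B] [Algebra R B] [Nontrivial B] :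
    Nontrivial (TensorProduct R B B) :=
  (Algebra.TensorProduct.lmul' R (S := B)).toRingHom.domain_nontrivial

lemma IsAbsolutelyFlat.isZero_localization_tensor_iff (hR : IsAbsolutelyFlat R)
    (P P' : PrimeSpectrum R) :
    IsZero (ModuleCat.of R (Localization.AtPrime P.asIdeal) ⊗
      ModuleCat.of R (Localization.AtPrime P'.asIdeal)) ↔ P ≠ P' := by
  rw [ModuleCat.isZero_iff_subsingleton]
  refine ⟨?_, hR.subsingleton_localization_tensorProduct⟩
  rintro h rfl
  have := nontrivial_tensorProduct_self (R := R) (Localization.AtPrime P.asIdeal)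
  exact not_subsingleton (TensorProduct R (Localization.AtPrime P.asIdeal) _) h

lemma exists_linearMap_quotient_apply_eq_one (P : Ideal R) [P.IsMaximal] {V : Type*}
    [AddCommGroup V] [Module R V] (hV : Module.IsTorsionBySet R V P) {z : V} (hz : z ≠ 0) :
    ∃ φ : V →ₗ[R] R ⧸ P, φ z = 1 := by
  let := Ideal.Quotient.field P
  let := hV.module
  have : IsScalarTower R (R ⧸ P) V := hV.isScalarTower
  obtain ⟨φ, hφ⟩ : ∃ φ : Module.Dual (R ⧸ P) V, φ z ≠ 0 := by
    simpa [hz] using (Module.forall_dual_apply_eq_zero_iff (R ⧸ P) z).not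
  exact ⟨((φ z)⁻¹ • φ).restrictScalars R, by simp [hφ]⟩

/-- A module `M` is s-unital over an ideal `J` if every element of `M` is fixed by an element of
`J`. Over an absolutely flat ring this amounts to `J • M = M`. -/
def IsSUnital (J : Ideal R) (M : Type*) [AddCommGroup M] [Module R M] : Prop :=
  ∀ y : M, ∃ e ∈ J, e • y = y

namespace IsSUnital

variable {J : Ideal R}

lemma of_injective {M N : Type*} [AddCommGroup M] [Module R M] [AddCommGroup N] [Module R N]
    (hN : IsSUnital J N) (f : M →ₗ[R] N) (hf : Function.Injective f) : IsSUnital J M := fun y =>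
  let ⟨e, he, h⟩ := hN (f y)
  ⟨e, he, hf (by rw [map_smul, h])⟩

lemma of_injective_of_forall_mem (hR : IsAbsolutelyFlat R) {M : Type*} [AddCommGroup M]
    [Module R M] (f : M →ₗ[R] R) (hf : Function.Injective f) (hfJ : ∀ y, f y ∈ J) :
    IsSUnital J M := fun y =>
  let ⟨x, hx⟩ := hR (f y)
  ⟨f y * x, J.mul_mem_right x (hfJ y), hf (by
    rw [map_smul, smul_eq_mul]
    linear_combination -hx)⟩

lemma of_one_mem (h : 1 ∈ J) (M : Type*) [AddCommGroup M] [Module R M] : IsSUnital J M :=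
  fun y => ⟨1, h, one_smul R y⟩

lemma sigma {ι : Type*} (X : ι → ModuleCat.{u} R) [HasCoproduct X]
    (hX : ∀ i, IsSUnital J (X i)) : IsSUnital J ↥(∐ X) := by
  let N : Submodule R ↥(∐ X) :=
    { carrier := {y | ∃ e ∈ J, e • y = y}
      zero_mem' := ⟨0, J.zero_mem, smul_zero _⟩
      add_mem' := fun {y z} ⟨e, he, hy⟩ ⟨f, hf, hz⟩ =>
        ⟨e + f - e * f, J.sub_mem (J.add_mem he hf) (J.mul_mem_right f he), by
          simp only [sub_smul, add_smul, smul_add, mul_smul, hz, smul_comm e f y, hy]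
          abel⟩
      smul_mem' := fun r y ⟨e, he, hy⟩ => ⟨e, he, by rw [smul_comm, hy]⟩ }
  have mkQ_eq_zero : ModuleCat.ofHom N.mkQ = 0 := Sigma.hom_ext _ _ fun i => by
    ext y
    obtain ⟨e, he, hy⟩ := hX i y
    exact (Submodule.Quotient.mk_eq_zero N).2 ⟨e, he, by rw [← map_smul, hy]⟩
  exact fun y => (Submodule.Quotient.mk_eq_zero N).1 (congr(ModuleCat.Hom.hom $mkQ_eq_zero y))

lemma exists_epi {J : Ideal R} {M : ModuleCat.{u} R} (hM : IsSUnital J M) :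
    ∃ e : M → R, (∀ y, e y ∈ J) ∧
      ∃ p : (∐ fun y => ModuleCat.of R (Ideal.span {e y})) ⟶ M, Epi p := by
  choose e heJ he using hM
  let p : (∐ fun y => ModuleCat.of R (Ideal.span {e y})) ⟶ M := Limits.Sigma.desc fun y =>
    ModuleCat.ofHom (LinearMap.toSpanSingleton R M y ∘ₗ (Ideal.span {e y}).subtype)
  refine ⟨e, heJ, p, (ModuleCat.epi_iff_surjective p).2 fun y => ?_⟩
  let ey : ModuleCat.of R (Ideal.span {e y}) := ⟨e y, Ideal.mem_span_singleton_self _⟩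
  refine ⟨Sigma.ι (fun y => ModuleCat.of R (Ideal.span {e y})) y ey, ?_⟩
  rw [← ModuleCat.comp_apply, Sigma.ι_desc]
  exact he y

end IsSUnital

end AbsolutelyFlat

lemma epi_homologyMap_mapNatTrans {C D : Type*} [Category* C] [Category* D] [HasZeroMorphisms C]
    [HasZeroMorphisms D] (S : ShortComplex C) [S.HasHomology] {F G : C ⥤ D}
    [F.PreservesZeroMorphisms] [G.PreservesZeroMorphisms] [F.PreservesHomology]
    [G.PreservesHomology] (τ : F ⟶ G) [Epi (τ.app S.homology)] :
    Epi (ShortComplex.homologyMap (S.mapNatTrans τ)) := by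
  rw [S.homologyMap_mapNatTrans τ]
  infer_instance

section Tensor

open DerivedCategory HomologicalComplex

variable {R : Type u} [CommRing R]

/-- The functor `Y ↦ Y ⊗ A` on modules, for a fixed cochain complex `A`. -/
noncomputable def tensorComplex (A : CochainComplex (ModuleCat.{u} R) ℤ) :
    ModuleCat.{u} R ⥤ CochainComplex (ModuleCat.{u} R) ℤ where
  obj Y := ((tensorLeft Y).mapHomologicalComplex _).obj A
  map f := (NatTrans.mapHomologicalComplex ((curriedTensor (ModuleCat.{u} R)).map f) _).app A
  map_id _ := by ext1; exact id_whiskerRight _ _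
  map_comp f g := by ext1; exact comp_whiskerRight _ _ _

variable (A : CochainComplex (ModuleCat.{u} R) ℤ)

/-- In degree `n`, the functor `Y ↦ Y ⊗ A` is `Y ↦ Y ⊗ A.X n`. -/
noncomputable def tensorComplexEval (n : ℤ) :
    tensorComplex A ⋙ eval _ _ n ≅ tensorRight (A.X n) := Iso.refl _

/-- The left unitor `R ⊗ A ≅ A` for complexes. -/
noncomputable def tensorComplexUnit : (tensorComplex A).obj (𝟙_ (ModuleCat.{u} R)) ≅ A :=
  Hom.isoOfComponents (fun n => λ_ (A.X n)) fun i j _ => (leftUnitor_naturality (A.d i j)).symm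

instance preservesColimits_tensorRight (M : ModuleCat.{u} R) : PreservesColimits (tensorRight M) :=
  preservesColimits_of_natIso (BraidedCategory.tensorLeftIsoTensorRight M)

instance tensorComplex_additive : (tensorComplex A).Additive where
  map_add {_ _ _ _} := by ext1; exact MonoidalPreadditive.add_whiskerRight _ _

instance preservesColimitsOfShape_tensorComplex (J : Type u) [SmallCategory J] :
    PreservesColimitsOfShape J (tensorComplex A) :=
  HomologicalComplex.preservesColimitsOfShape_of_eval _ fun n =>
    preservesColimitsOfShape_of_natIso (tensorComplexEval A n).symm

lemma epi_whiskerRight {F Y : ModuleCat.{u} R} (p : F ⟶ Y) [Epi p] (M : ModuleCat.{u} R) :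
    Epi (p ▷ M) :=
  (preservesEpimorphisms_of_preservesColimitsOfShape (tensorRight M)).preserves p

lemma epi_homologyMap_tensorComplex {F Y : ModuleCat.{u} R} [Module.Flat R F] [Module.Flat R Y]
    (p : F ⟶ Y) [Epi p] (n : ℤ) : Epi (homologyMap ((tensorComplex A).map p) n) := by
  let τ : tensorLeft F ⟶ tensorLeft Y := (curriedTensor (ModuleCat.{u} R)).map p
  have : Epi (τ.app (A.sc n).homology) := epi_whiskerRight p _
  exact epi_homologyMap_mapNatTrans (A.sc n) τ

lemma IsAbsolutelyFlat.shortExact_map_tensorComplex (hR : IsAbsolutelyFlat R)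
    {S : ShortComplex (ModuleCat.{u} R)} (hS : S.ShortExact) :
    (S.map (tensorComplex A)).ShortExact :=
  shortExact_of_degreewise_shortExact _ fun n =>
    have := hR.flat (A.X n)
    hS.map_of_exact (tensorRight (A.X n))

end Tensor

lemma mk_distinguished_of_iso₃ {T : Type u} [Category.{v} T] [HasZeroObject T] [Preadditive T]
    [HasShift T ℤ] [∀ n : ℤ, (shiftFunctor T n).Additive] [Pretriangulated T] {X Y Z Z' : T}
    {f : X ⟶ Y} {g : Y ⟶ Z} {h : Z ⟶ X⟦(1 : ℤ)⟧} (hT : Triangle.mk f g h ∈ distTriang T)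
    (i : Z ≅ Z') : Triangle.mk f (g ≫ i.hom) (i.inv ≫ h) ∈ distTriang T :=
  isomorphic_distinguished _ hT _ <| Triangle.isoMk _ _ (Iso.refl X) (Iso.refl Y) i.symm
    (by change f ≫ 𝟙 Y = 𝟙 X ≫ f; simp)
    (by change (g ≫ i.hom) ≫ i.inv = 𝟙 Y ≫ g; simp)
    (by change (i.inv ≫ h) ≫ (𝟙 X)⟦(1 : ℤ)⟧' = i.inv ≫ h; simp)

section TensorMem

open DerivedCategory

variable {R : Type u} [CommRing R] [HasDerivedCategory.{w} (ModuleCat.{u} R)]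
  {L : Set (DerivedCategory (ModuleCat.{u} R))} {A : CochainComplex (ModuleCat.{u} R) ℤ}

/-- Shifting the complex `B` shifts `M ⊗ B`. -/
noncomputable def tensorComplexShiftIso (M : ModuleCat.{u} R)
    (B : CochainComplex (ModuleCat.{u} R) ℤ) :
    (Q.obj ((tensorComplex B).obj M))⟦(1 : ℤ)⟧ ≅ Q.obj ((tensorComplex (B⟦(1 : ℤ)⟧)).obj M) :=
  (Q.commShiftIso (1 : ℤ)).symm.app _ ≪≫
    Q.mapIso ((((tensorLeft M).mapHomologicalComplex _).commShiftIso (1 : ℤ)).symm.app B)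

lemma IsAbsolutelyFlat.exists_triangle_tensorComplex_kernel (hR : IsAbsolutelyFlat R)
    (B : CochainComplex (ModuleCat.{u} R) ℤ) {F Y : ModuleCat.{u} R} (p : F ⟶ Y) [Epi p] :
    ∃ g δ, Triangle.mk (Q.map ((tensorComplex B).map p))
      (g : _ ⟶ Q.obj ((tensorComplex (B⟦(1 : ℤ)⟧)).obj (kernel p))) δ ∈ distTriang _ :=
  have hS : (ShortComplex.mk (kernel.ι p) p (kernel.condition p)).ShortExact :=
    { exact := ShortComplex.exact_kernel p }
  ⟨_, _, mk_distinguished_of_iso₃ (rot_of_distTriang _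
    (triangleOfSES_distinguished (hR.shortExact_map_tensorComplex B hS)))
      (tensorComplexShiftIso (kernel p) B)⟩

namespace IsLocalizingSubcategory

lemma tensor_mem_of_shortExact (hL : IsLocalizingSubcategory.{w'} L) (hR : IsAbsolutelyFlat R)
    {S : ShortComplex (ModuleCat.{u} R)} (hS : S.ShortExact)
    (h₁ : Q.obj ((tensorComplex A).obj S.X₁) ∈ L) (h₃ : Q.obj ((tensorComplex A).obj S.X₃) ∈ L) :
    Q.obj ((tensorComplex A).obj S.X₂) ∈ L :=
  hL.mem₂ (triangleOfSES_distinguished (hR.shortExact_map_tensorComplex A hS)) h₁ h₃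

lemma tensor_mem_of_resolution (hL : IsLocalizingSubcategory.{w'} L) (hR : IsAbsolutelyFlat R)
    {𝓕 𝓨 : Set (ModuleCat.{u} R)} (h𝓕 : ∀ F ∈ 𝓕, Q.obj ((tensorComplex A).obj F) ∈ L)
    (h𝓨 : ∀ Y ∈ 𝓨, ∃ F ∈ 𝓕, ∃ p : F ⟶ Y, Epi p ∧ kernel p ∈ 𝓨) {Y : ModuleCat.{u} R}
    (hY : Y ∈ 𝓨) : Q.obj ((tensorComplex A).obj Y) ∈ L := by
  let 𝓑 := {X | ∃ Y ∈ 𝓨, ∃ B : CochainComplex (ModuleCat.{u} R) ℤ,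
    (∀ F ∈ 𝓕, Q.obj ((tensorComplex B).obj F) ∈ L) ∧ Q.obj ((tensorComplex B).obj Y) = X}
  refine hL.mem_of_exists_epi_homology 𝓑 ?_ ⟨Y, hY, A, h𝓕, rfl⟩
  rintro _ ⟨Y, hY, B, hB, rfl⟩
  obtain ⟨F, hF, p, hp, hK⟩ := h𝓨 Y hY
  obtain ⟨g, δ, hT⟩ := hR.exists_triangle_tensorComplex_kernel B p
  refine ⟨_, hB F hF, _, ⟨kernel p, hK, B⟦(1 : ℤ)⟧, fun F hF =>
    hL.mem_of_iso (tensorComplexShiftIso F B) (hL.shift_mem _ 1 (hB F hF)), rfl⟩,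
    _, _, _, hT, fun n => ?_⟩
  have := hR.flat F
  have := hR.flat Y
  exact ((MorphismProperty.epimorphisms _).arrow_mk_iso_iff
    (Arrow.isoOfNatIso (homologyFunctorFactors _ n) (Arrow.mk ((tensorComplex B).map p)))).2
      (epi_homologyMap_tensorComplex B p n)

end IsLocalizingSubcategory

end TensorMem

section TensorIdeal

open DerivedCategory

variable {R : Type u} [CommRing R] [HasDerivedCategory.{w} (ModuleCat.{u} R)]
  {L : Set (DerivedCategory (ModuleCat.{u} R))} {A : CochainComplex (ModuleCat.{u} R) ℤ}

namespace IsLocalizingSubcategory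

lemma tensor_span_singleton_mem (hL : IsLocalizingSubcategory.{w'} L) (hR : IsAbsolutelyFlat R)
    {r s t : R} (hr : Q.obj ((tensorComplex A).obj (ModuleCat.of R (Ideal.span {r}))) ∈ L)
    (hs : Q.obj ((tensorComplex A).obj (ModuleCat.of R (Ideal.span {s}))) ∈ L)
    (ht : t ∈ Ideal.span {r} ⊔ Ideal.span {s}) :
    Q.obj ((tensorComplex A).obj (ModuleCat.of R (Ideal.span {t}))) ∈ L := by
  obtain ⟨ρ⟩ := hR.nonempty_retract_span_singleton ht
  let F := tensorComplex A ⋙ Q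
  have := preservesBinaryBiproducts_of_preservesBiproducts F
  exact hL.mem_of_retract (ρ.map F) (hL.mem_of_iso (F.mapBiprod _ _).symm (hL.biprod_mem hr hs))

/-- The ideal of those `r` for which `rR ⊗ A` lies in the localizing subcategory `L`. -/
def tensorIdeal (hL : IsLocalizingSubcategory.{w'} L) (hR : IsAbsolutelyFlat R)
    (A : CochainComplex (ModuleCat.{u} R) ℤ) : Ideal R where
  carrier := {r | Q.obj ((tensorComplex A).obj (ModuleCat.of R (Ideal.span {r}))) ∈ L}
  zero_mem' := by
    have : Subsingleton (Ideal.span {(0 : R)}) := by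
      rw [Ideal.span_singleton_eq_bot.2 rfl]
      infer_instance
    exact hL.mem_of_isZero ((tensorComplex A ⋙ Q).map_isZero (ModuleCat.isZero_of_subsingleton _))
  add_mem' hr hs := hL.tensor_span_singleton_mem hR hr hs <| Ideal.add_mem _
    (Ideal.mem_sup_left (Ideal.mem_span_singleton_self _))
    (Ideal.mem_sup_right (Ideal.mem_span_singleton_self _))
  smul_mem' c _ hr := hL.tensor_span_singleton_mem hR hr hr <|
    Ideal.mem_sup_left (Ideal.mul_mem_left _ c (Ideal.mem_span_singleton_self _))

lemma one_mem_tensorIdeal (hL : IsLocalizingSubcategory.{w'} L) (hR : IsAbsolutelyFlat R) :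
    1 ∈ hL.tensorIdeal hR A ↔ Q.obj A ∈ L := by
  have e : ModuleCat.of R (Ideal.span {(1 : R)}) ≅ 𝟙_ (ModuleCat.{u} R) :=
    ((LinearEquiv.ofEq _ _ Ideal.span_singleton_one).trans Submodule.topEquiv).toModuleIso
  let i := (tensorComplex A ⋙ Q).mapIso e ≪≫ Q.mapIso (tensorComplexUnit A)
  exact ⟨fun h => hL.mem_of_iso i h, fun h => hL.mem_of_iso i.symm h⟩

lemma tensor_mem_of_isSUnital (hL : IsLocalizingSubcategory.{u} L) (hR : IsAbsolutelyFlat R)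
    {Y : ModuleCat.{u} R} (hY : IsSUnital (hL.tensorIdeal hR A) Y) :
    Q.obj ((tensorComplex A).obj Y) ∈ L := by
  let J := hL.tensorIdeal hR A
  refine hL.tensor_mem_of_resolution hR
    (𝓕 := {F | Q.obj ((tensorComplex A).obj F) ∈ L}) (𝓨 := {Y | IsSUnital J Y}) (fun _ hF => hF)
    (fun Y hY => ?_) hY
  obtain ⟨e, heJ, p, hp⟩ := IsSUnital.exists_epi hY
  refine ⟨_, hL.map_sigma_mem (tensorComplex A ⋙ Q) _ heJ, p, hp, ?_⟩
  have hF (y) : IsSUnital J (Ideal.span {e y}) :=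
    .of_injective_of_forall_mem hR (Ideal.span {e y}).subtype Subtype.val_injective fun z =>
      (Ideal.span_singleton_le_iff_mem J).2 (heJ y) z.2
  exact (IsSUnital.sigma _ hF).of_injective (kernel.ι p).hom
    ((ModuleCat.mono_iff_injective (kernel.ι p)).1 inferInstance)

lemma tensor_mem (hL : IsLocalizingSubcategory.{u} L) (hR : IsAbsolutelyFlat R)
    (hA : Q.obj A ∈ L) (Y : ModuleCat.{u} R) : Q.obj ((tensorComplex A).obj Y) ∈ L :=
  hL.tensor_mem_of_isSUnital hR (.of_one_mem ((hL.one_mem_tensorIdeal hR).2 hA) Y)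

end IsLocalizingSubcategory

end TensorIdeal

section LocalToGlobal

open DerivedCategory

variable {R : Type u} [CommRing R]

lemma IsSemiArtinianRing.exists_surjective (hsa : IsSemiArtinianRing R) {J : Ideal R}
    (hJ : J ≠ ⊤) : ∃ s ∉ J, ∃ P : Ideal R, P.IsMaximal ∧ ∃ f : Ideal.span {s} →ₗ[R] R ⧸ P,
      Function.Surjective f ∧ ∀ y, f y = 0 → y.1 ∈ J := by
  obtain ⟨S, hS⟩ := hsa J hJ
  obtain ⟨P, hP, ⟨e⟩⟩ := isSimpleModule_iff_quot_maximal.1 hS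
  have := hS.nontrivial
  obtain ⟨⟨t, ht⟩, ht0⟩ := exists_ne (0 : S)
  obtain ⟨s, rfl⟩ := Ideal.Quotient.mk_surjective t
  let f : Ideal.span {s} →ₗ[R] S := (J.mkQ ∘ₗ (Ideal.span {s}).subtype).codRestrict S fun y => by
    obtain ⟨b, hb⟩ := Ideal.mem_span_singleton'.1 y.2
    change J.mkQ y.1 ∈ S
    rw [← hb, ← smul_eq_mul, map_smul]
    exact S.smul_mem b ht
  have hf : f ≠ 0 := fun h =>
    ht0 (LinearMap.congr_fun h ⟨s, Ideal.mem_span_singleton_self s⟩)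
  refine ⟨s, fun hs => ht0 (Subtype.ext (Ideal.Quotient.eq_zero_iff_mem.2 hs)), P, hP,
    e.toLinearMap ∘ₗ f, e.surjective.comp (LinearMap.surjective_of_ne_zero hf), fun y hy => ?_⟩
  exact Ideal.Quotient.eq_zero_iff_mem.1 (congrArg Subtype.val (e.map_eq_zero_iff.1 hy))

lemma IsLocalizingSubcategory.mem_of_forall_tensorResidueField_mem
    [HasDerivedCategory.{w} (ModuleCat.{u} R)] {L : Set (DerivedCategory (ModuleCat.{u} R))}
    (hL : IsLocalizingSubcategory.{u} L) (hR : IsAbsolutelyFlat R) (hsa : IsSemiArtinianRing R)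
    {A : CochainComplex (ModuleCat.{u} R) ℤ} (hA : ∀ P, Q.obj (tensorResidueField R P A) ∈ L) :
    Q.obj A ∈ L := by
  rw [← hL.one_mem_tensorIdeal hR, ← Ideal.eq_top_iff_one]
  by_contra hJ
  obtain ⟨s, hs, P, hP, f, hf, hker⟩ := hsa.exists_surjective hJ
  have hk : Q.obj ((tensorComplex A).obj (ModuleCat.of R (R ⧸ P))) ∈ L :=
    hL.mem_of_iso ((tensorComplex A ⋙ Q).mapIso (hR.localizationEquivQuotient P).toModuleIso)
      (hA ⟨P, hP.isPrime⟩)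
  refine hs (hL.tensor_mem_of_shortExact hR (LinearMap.shortExact_shortComplexKer hf)
    (hL.tensor_mem_of_isSUnital hR ?_) hk)
  exact .of_injective_of_forall_mem hR ((Ideal.span {s}).subtype ∘ₗ (LinearMap.ker f).subtype)
    (Subtype.val_injective.comp Subtype.val_injective) fun y => hker _ y.2

end LocalToGlobal

section Minimality

open DerivedCategory HomologicalComplex

lemma nonempty_retract_single {C : Type*} [Category* C] [HasZeroMorphisms C] [HasZeroObject C]
    {ι : Type*} [DecidableEq ι] {c : ComplexShape ι} {B : HomologicalComplex C c} {n : ι} {S : C}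
    {t : S ⟶ B.X n} {s : B.X n ⟶ S} (hts : t ≫ s = 𝟙 S) (ht : ∀ k, c.Rel n k → t ≫ B.d n k = 0)
    (hs : ∀ k, c.Rel k n → B.d k n ≫ s = 0) : Nonempty (Retract ((single C c n).obj S) B) :=
  ⟨mkHomFromSingle t ht, mkHomToSingle s hs, from_single_hom_ext <| by
    rw [comp_f, mkHomFromSingle_f, mkHomToSingle_f, Category.assoc, reassoc_of% hts]
    simp⟩

variable {R : Type u} [CommRing R]

lemma nonempty_retract_single_quotient {ι : Type*} [DecidableEq ι] {c : ComplexShape ι}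
    {B : HomologicalComplex (ModuleCat.{u} R) c} {n : ι} (P : Ideal R) [P.IsMaximal]
    (hP : Module.IsTorsionBySet R (B.X n) P) (hB : ¬ B.ExactAt n) :
    Nonempty (Retract ((single _ c n).obj (ModuleCat.of R (R ⧸ P))) B) := by
  rw [exactAt_iff, ShortComplex.moduleCat_exact_iff] at hB
  push Not at hB
  obtain ⟨(x : B.X n), (hx : B.d n (c.next n) x = 0), hx'⟩ := hB
  let boundaries := LinearMap.range (B.d (c.prev n) n).hom
  have hx0 : boundaries.mkQ x ≠ 0 := fun h =>
    let ⟨y, hy⟩ := (Submodule.Quotient.mk_eq_zero boundaries).1 h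
    hx' y hy
  obtain ⟨φ, hφ⟩ := exists_linearMap_quotient_apply_eq_one P (V := B.X n ⧸ boundaries)
    (fun v r => by
      obtain ⟨v, rfl⟩ := boundaries.mkQ_surjective v
      exact congrArg boundaries.mkQ (@hP v r)) hx0
  refine nonempty_retract_single
    (t := ModuleCat.ofHom (P.liftQ (LinearMap.toSpanSingleton R (B.X n) x) fun r hr =>
      @hP x ⟨r, hr⟩)) (s := ModuleCat.ofHom (φ ∘ₗ boundaries.mkQ))
    (ModuleCat.hom_ext (Submodule.linearMap_qext _ (LinearMap.ext_ring ?_)))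
    (fun k hk => ?_) fun k hk => ?_
  · change φ (boundaries.mkQ ((1 : R) • x)) = 1
    rw [one_smul, hφ]
  · obtain rfl := c.next_eq' hk
    refine ModuleCat.hom_ext (Submodule.linearMap_qext _ (LinearMap.ext_ring ?_))
    change B.d n (c.next n) ((1 : R) • x) = 0
    rw [one_smul, hx]
  · obtain rfl := c.prev_eq' hk
    ext y
    change φ (boundaries.mkQ (B.d (c.prev n) n y)) = 0
    rw [Submodule.mkQ_apply, (Submodule.Quotient.mk_eq_zero boundaries).2 ⟨y, rfl⟩, map_zero]

lemma isZero_Q_obj_of_acyclic {C : Type*} [Category* C] [Abelian C] [HasDerivedCategory.{w} C]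
    {B : CochainComplex C ℤ} (hB : B.Acyclic) : IsZero (Q.obj B) := by
  have : QuasiIso (0 : B ⟶ B) := ⟨fun n => (quasiIsoAt_iff_exactAt _ n (hB n)).2 (hB n)⟩
  exact IsZero.of_epi_eq_zero (Q.map (0 : B ⟶ B)) (Q.map_zero B B)

lemma IsLocalizingSubcategory.residueFieldObj_mem_of_tensorResidueField
    [HasDerivedCategory.{w} (ModuleCat.{u} R)] {L : Set (DerivedCategory (ModuleCat.{u} R))}
    (hL : IsLocalizingSubcategory.{u} L) (hR : IsAbsolutelyFlat R)
    {A : CochainComplex (ModuleCat.{u} R) ℤ} (hA : Q.obj A ∈ L) {P : PrimeSpectrum R}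
    (hP : ¬ IsZero (Q.obj (tensorResidueField R P A))) : residueFieldObj R P ∈ L := by
  obtain ⟨n, hn⟩ : ∃ n, ¬ (tensorResidueField R P A).ExactAt n := by
    by_contra! h
    exact hP (isZero_Q_obj_of_acyclic h)
  have := hR.isMaximal P.asIdeal
  obtain ⟨ρ⟩ := nonempty_retract_single_quotient P.asIdeal
    (isTorsionBySet_tensorProduct (hR.isTorsionBySet_localization P.asIdeal) (A.X n)) hn
  have hk := hL.mem_of_retract (ρ.map Q) (hL.tensor_mem hR hA _)
  exact hL.mem_of_iso ((singleFunctor _ 0).mapIso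
    (hR.localizationEquivQuotient P.asIdeal).symm.toModuleIso)
      ((hL.singleFunctor_obj_mem_iff n).1 hk)

end Minimality

section TensorFunctor

open DerivedCategory

instance preservesColimitsOfShape_mapDerivedCategory {C D : Type*} [Category* C] [Category* D]
    [Abelian C] [Abelian D] [HasDerivedCategory.{w} C] [HasDerivedCategory.{w'} D] (F : C ⥤ D)
    [F.Additive] [PreservesFiniteLimits F] [PreservesFiniteColimits F] {J : Type*}
    [HasColimitsOfShape (Discrete J) C] [HasExactColimitsOfShape (Discrete J) C]
    [HasColimitsOfShape (Discrete J) D] [HasExactColimitsOfShape (Discrete J) D]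
    [PreservesColimitsOfShape (Discrete J) F] :
    PreservesColimitsOfShape (Discrete J) F.mapDerivedCategory := by
  have : PreservesColimitsOfShape (Discrete J) (F.mapHomologicalComplex (.up ℤ)) :=
    HomologicalComplex.preservesColimitsOfShape_of_eval _ fun n =>
      inferInstanceAs (PreservesColimitsOfShape _ (HomologicalComplex.eval C _ n ⋙ F))
  have : PreservesColimitsOfShape (Discrete J) (Q ⋙ F.mapDerivedCategory) :=
    preservesColimitsOfShape_of_natIso F.mapDerivedCategoryFactors.symm
  exact preservesColimitsOfShape_of_Q_comp _

variable {R : Type u} [CommRing R] [HasDerivedCategory.{w} (ModuleCat.{u} R)]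
  {L : Set (DerivedCategory (ModuleCat.{u} R))}

lemma IsLocalizingSubcategory.comap_tensorLeft (hL : IsLocalizingSubcategory.{u} L)
    (Y : ModuleCat.{u} R) [Module.Flat R Y] :
    IsLocalizingSubcategory.{u} {X | (tensorLeft Y).mapDerivedCategory.obj X ∈ L} :=
  hL.comap (tensorLeft Y).mapDerivedCategory

lemma IsLocalizingSubcategory.tensorResidueField_mem (hL : IsLocalizingSubcategory.{u} L)
    {P : PrimeSpectrum R} (hP : residueFieldObj R P ∈ L)
    (A : CochainComplex (ModuleCat.{u} R) ℤ) : Q.obj (tensorResidueField R P A) ∈ L := by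
  let k := ModuleCat.of R (Localization.AtPrime P.asIdeal)
  have : Module.Flat R k := inferInstanceAs (Module.Flat R (Localization.AtPrime P.asIdeal))
  refine hL.mem_of_iso ((tensorLeft k).mapDerivedCategoryFactors.app A)
    ((hL.comap_tensorLeft k).mem_of_isSeparator (ModuleCat.isSeparator R) ?_ (Q.obj A))
  let e : 𝟙_ (ModuleCat.{u} R) ≅ ModuleCat.of R (Shrink.{u} R) :=
    (Shrink.linearEquiv R R).symm.toModuleIso
  exact hL.mem_of_iso ((singleFunctor _ 0).mapIso ((ρ_ k).symm ≪≫ whiskerLeftIso k e) ≪≫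
    (((tensorLeft k).mapDerivedCategorySingleFunctor 0).app _).symm) hP

lemma isZero_singleFunctor_obj_iff {C : Type*} [Category* C] [Abelian C]
    [HasDerivedCategory.{w} C] (X : C) (n : ℤ) : IsZero ((singleFunctor C n).obj X) ↔ IsZero X :=
  ⟨fun h => (IsZero.iff_id_eq_zero X).2 <| (singleFunctor C n).map_injective (h.eq_of_src _ _),
    (singleFunctor C n).map_isZero⟩

lemma IsAbsolutelyFlat.isZero_tensor_residueFieldObj_iff (hR : IsAbsolutelyFlat R)
    (P P' : PrimeSpectrum R) :
    IsZero ((tensorLeft (ModuleCat.of R (Localization.AtPrime P.asIdeal))).mapDerivedCategory.obj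
      (residueFieldObj R P')) ↔ P ≠ P' :=
  ((Functor.mapDerivedCategorySingleFunctor _ 0).app _).isZero_iff.trans <|
    (isZero_singleFunctor_obj_iff _ 0).trans (hR.isZero_localization_tensor_iff P P')

end TensorFunctor

section Support

open DerivedCategory

variable {R : Type u} [CommRing R] [HasDerivedCategory.{w} (ModuleCat.{u} R)]

/-- The map `σ`: the set of primes `P` such that `k(P) ⊗ A ≠ 0` for some object `A` of `L`. -/
def residueFieldSupport (L : Set (DerivedCategory (ModuleCat.{u} R))) : Set (PrimeSpectrum R) :=
  {P | ∃ A : CochainComplex (ModuleCat.{u} R) ℤ,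
    Q.obj A ∈ L ∧ ¬ IsZero (Q.obj (tensorResidueField R P A))}

/-- The map `τ`: the localizing subcategory generated by the `k(P)` with `P ∈ W`. -/
def residueFieldClosure (W : Set (PrimeSpectrum R)) : Set (DerivedCategory (ModuleCat.{u} R)) :=
  localizingClosure.{u} {A | ∃ P ∈ W, A = residueFieldObj R P}

lemma residueFieldSupport_mono {L L' : Set (DerivedCategory (ModuleCat.{u} R))} (h : L ⊆ L') :
    residueFieldSupport L ⊆ residueFieldSupport L' :=
  fun _ ⟨A, hA, hP⟩ => ⟨A, h hA, hP⟩

lemma residueFieldClosure_mono {W W' : Set (PrimeSpectrum R)} (h : W ⊆ W') :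
    residueFieldClosure W ⊆ residueFieldClosure W' :=
  localizingClosure_mono fun _ ⟨P, hP, hA⟩ => ⟨P, h hP, hA⟩

lemma isLocalizingSubcategory_residueFieldClosure (W : Set (PrimeSpectrum R)) :
    IsLocalizingSubcategory.{u} (residueFieldClosure W) :=
  isLocalizingSubcategory_localizingClosure

lemma residueFieldObj_mem_residueFieldClosure {W : Set (PrimeSpectrum R)} {P : PrimeSpectrum R}
    (hP : P ∈ W) : residueFieldObj R P ∈ residueFieldClosure W :=
  subset_localizingClosure ⟨P, hP, rfl⟩

lemma residueFieldSupport_residueFieldClosure (hR : IsAbsolutelyFlat R)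
    (W : Set (PrimeSpectrum R)) : residueFieldSupport (residueFieldClosure W) = W := by
  have e (P : PrimeSpectrum R) (A : CochainComplex (ModuleCat.{u} R) ℤ) :=
    (tensorLeft (ModuleCat.of R
      (Localization.AtPrime P.asIdeal))).mapDerivedCategoryFactors.app A
  ext P
  constructor
  · rintro ⟨A, hA, hP⟩
    by_contra hPW
    refine hP (IsZero.of_iso ?_ (e P A).symm)
    refine localizingClosure_subset (isLocalizingSubcategory_isZero.comap_tensorLeft
      (ModuleCat.of R (Localization.AtPrime P.asIdeal))) ?_ hA
    rintro _ ⟨P', hP', rfl⟩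
    exact (hR.isZero_tensor_residueFieldObj_iff P P').2 fun h => hPW (h ▸ hP')
  · intro hP
    let i := Q.objObjPreimageIso (residueFieldObj R P)
    refine ⟨_, (isLocalizingSubcategory_residueFieldClosure W).mem_of_iso i.symm
      (residueFieldObj_mem_residueFieldClosure hP), fun h => ?_⟩
    exact (hR.isZero_tensor_residueFieldObj_iff P P).1
      (h.of_iso (Functor.mapIso _ i.symm ≪≫ e P _)) rfl

lemma residueFieldClosure_residueFieldSupport (hR : IsAbsolutelyFlat R)
    (hsa : IsSemiArtinianRing R) {L : Set (DerivedCategory (ModuleCat.{u} R))}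
    (hL : IsLocalizingSubcategory.{u} L) : residueFieldClosure (residueFieldSupport L) = L := by
  refine (localizingClosure_subset hL ?_).antisymm fun X hX => ?_
  · rintro _ ⟨P, ⟨A, hA, hP⟩, rfl⟩
    exact hL.residueFieldObj_mem_of_tensorResidueField hR hA hP
  · have hL' := isLocalizingSubcategory_residueFieldClosure (residueFieldSupport L)
    let i := Q.objObjPreimageIso X
    refine hL'.mem_of_iso i (hL'.mem_of_forall_tensorResidueField_mem hR hsa fun P => ?_)
    by_cases hP : IsZero (Q.obj (tensorResidueField R P (Q.objPreimage X)))
    · exact hL'.mem_of_isZero hP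
    · exact hL'.tensorResidueField_mem (residueFieldObj_mem_residueFieldClosure
        ⟨_, hL.mem_of_iso i.symm hX, hP⟩) _

end Support

theorem statement18 (R : Type u) [CommRing R] [HasDerivedCategory.{w} (ModuleCat.{u} R)]
    (hreg : IsAbsolutelyFlat R) (hsa : IsSemiArtinianRing R)
    (tau : Set (PrimeSpectrum R) → Set (DerivedCategory (ModuleCat.{u} R)))
    (htau : ∀ W, tau W = localizingClosure.{u}
      {A | ∃ P ∈ W, A = residueFieldObj R P})
    (sigma : Set (DerivedCategory (ModuleCat.{u} R)) → Set (PrimeSpectrum R))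
    (hsigma : ∀ L, sigma L = {P | ∃ A' : CochainComplex (ModuleCat.{u} R) ℤ,
      DerivedCategory.Q.obj A' ∈ L ∧
        ¬ IsZero (DerivedCategory.Q.obj (tensorResidueField R P A'))}) :
    (∀ W, IsLocalizingSubcategory.{u} (tau W)) ∧
      (∀ W, sigma (tau W) = W) ∧
      (∀ L, IsLocalizingSubcategory.{u} L → tau (sigma L) = L) ∧
      (∀ W W' : Set (PrimeSpectrum R), W ⊆ W' → tau W ⊆ tau W') ∧
      (∀ L L' : Set (DerivedCategory (ModuleCat.{u} R)), L ⊆ L' → sigma L ⊆ sigma L') := by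
  obtain rfl : tau = residueFieldClosure := funext htau
  obtain rfl : sigma = residueFieldSupport := funext hsigma
  exact ⟨isLocalizingSubcategory_residueFieldClosure,
    residueFieldSupport_residueFieldClosure hreg,
    fun _ => residueFieldClosure_residueFieldSupport hreg hsa,
    fun _ _ => residueFieldClosure_mono, fun _ _ => residueFieldSupport_mono⟩
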